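/- For every L_⊳-formula φ: φ ∈ ICK ⊕ ((p ∧ (p ⊳ q)) → q) if and only if φ is valid on every conditional Kripke frame (X, ≤, 𝓡) satisfying: for all worlds x ∈ X and all upsets a, if x ∈ a then x ∈ ↑(R_a[x]). -/

import Mathlib

/-! ## The conditional language `L_⊳` -/

/-- Formulas of the conditional language `L_⊳`, with proposition letters
indexed by the countable set `ℕ`. -/
inductive CForm : Type where
  | var : ℕ → CForm
  | bot : CForm
  | and : CForm → CForm → CForm
  | or : CForm → CForm → CForm
  | imp : CForm → CForm → CForm
  | cond : CForm → CForm → CForm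

/-- `⊤ := ⊥ → ⊥`. -/
def cTop : CForm := CForm.imp CForm.bot CForm.bot

/-- `φ ↔ ψ := (φ → ψ) ∧ (ψ → φ)`. -/
def cIff (φ ψ : CForm) : CForm := CForm.and (CForm.imp φ ψ) (CForm.imp ψ φ)

/-- Uniform substitution of formulas for proposition letters. -/
def psubst (σ : ℕ → CForm) : CForm → CForm
  | CForm.var q => σ q
  | CForm.bot => CForm.bot
  | CForm.and φ ψ => CForm.and (psubst σ φ) (psubst σ ψ)
  | CForm.or φ ψ => CForm.or (psubst σ φ) (psubst σ ψ)
  | CForm.imp φ ψ => CForm.imp (psubst σ φ) (psubst σ ψ)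
  | CForm.cond φ ψ => CForm.cond (psubst σ φ) (psubst σ ψ)

/-- The logic `ICK ⊕ Γ`: the smallest set of `L_⊳`-formulas containing an
axiomatisation of intuitionistic propositional logic, the formulas of `Γ`, the
axioms `(k_c)` and `(n_c)`, closed under uniform substitution, modus ponens and
the two congruence rules. -/
inductive ICK (Γ : Set CForm) : CForm → Prop where
  | prem {φ : CForm} : φ ∈ Γ → ICK Γ φ
  | a1 : ICK Γ (CForm.imp (CForm.and (CForm.var 0) (CForm.var 1)) (CForm.var 0))
  | a2 : ICK Γ (CForm.imp (CForm.and (CForm.var 0) (CForm.var 1)) (CForm.var 1))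
  | a3 : ICK Γ (CForm.imp (CForm.imp (CForm.var 0) (CForm.var 1))
      (CForm.imp (CForm.imp (CForm.var 0) (CForm.var 2))
        (CForm.imp (CForm.var 0) (CForm.and (CForm.var 1) (CForm.var 2)))))
  | a4 : ICK Γ (CForm.imp (CForm.var 0) (CForm.or (CForm.var 0) (CForm.var 1)))
  | a5 : ICK Γ (CForm.imp (CForm.var 1) (CForm.or (CForm.var 0) (CForm.var 1)))
  | a6 : ICK Γ (CForm.imp (CForm.imp (CForm.var 0) (CForm.var 2))
      (CForm.imp (CForm.imp (CForm.var 1) (CForm.var 2))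
        (CForm.imp (CForm.or (CForm.var 0) (CForm.var 1)) (CForm.var 2))))
  | a7 : ICK Γ (CForm.imp CForm.bot (CForm.var 0))
  | a8 : ICK Γ (CForm.imp (CForm.var 0) (CForm.imp (CForm.var 1) (CForm.var 0)))
  | a9 : ICK Γ (CForm.imp
      (CForm.imp (CForm.var 0) (CForm.imp (CForm.var 1) (CForm.var 2)))
      (CForm.imp (CForm.imp (CForm.var 0) (CForm.var 1))
        (CForm.imp (CForm.var 0) (CForm.var 2))))
  | kc : ICK Γ (cIff (CForm.cond (CForm.var 0) (CForm.and (CForm.var 1) (CForm.var 2)))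
      (CForm.and (CForm.cond (CForm.var 0) (CForm.var 1))
        (CForm.cond (CForm.var 0) (CForm.var 2))))
  | nc : ICK Γ (cIff (CForm.cond (CForm.var 0) cTop) cTop)
  | subst {φ : CForm} (σ : ℕ → CForm) : ICK Γ φ → ICK Γ (psubst σ φ)
  | mp {φ ψ : CForm} : ICK Γ (CForm.imp φ ψ) → ICK Γ φ → ICK Γ ψ
  | congL {φ ψ χ : CForm} :
      ICK Γ (cIff φ ψ) → ICK Γ (cIff (CForm.cond φ χ) (CForm.cond ψ χ))
  | congR {φ ψ χ : CForm} :
      ICK Γ (cIff φ ψ) → ICK Γ (cIff (CForm.cond χ φ) (CForm.cond χ ψ))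

/-! ## Conditional Kripke frames and semantics -/

/-- `a` is an upset (upward closed set) w.r.t. the relation `le`. -/
def IsUpset {X : Type} (le : X → X → Prop) (a : Set X) : Prop :=
  ∀ ⦃x y : X⦄, le x y → x ∈ a → y ∈ a

/-- The upward closure `↑s` of a set `s` w.r.t. the relation `le`. -/
def upCl {X : Type} (le : X → X → Prop) (s : Set X) : Set X :=
  {z | ∃ y ∈ s, le y z}

/-- Truth sets of `L_⊳`-formulas, by intuitionistic Kripke semantics for the
propositional connectives, where `x ⊨ φ ⊳ ψ` iff every `y` with
`x R_{V(φ)} y` satisfies `ψ` (here `V(φ)` is the truth set of `φ`). -/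
def csat {X : Type} (le : X → X → Prop) (R : Set X → X → X → Prop)
    (V : ℕ → Set X) : CForm → Set X
  | CForm.var p => V p
  | CForm.bot => ∅
  | CForm.and φ ψ => csat le R V φ ∩ csat le R V ψ
  | CForm.or φ ψ => csat le R V φ ∪ csat le R V ψ
  | CForm.imp φ ψ => {x | ∀ y, le x y → y ∈ csat le R V φ → y ∈ csat le R V ψ}
  | CForm.cond φ ψ => {x | ∀ y, R (csat le R V φ) x y → y ∈ csat le R V ψ}

/-- A conditional Kripke frame: a nonempty preordered set `(X, le)` with a
family of relations `R a` (indexed by the upsets `a`) satisfying the coherence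
condition `(≤ ∘ R_a) ⊆ (R_a ∘ ≤)`. -/
structure CondFrame where
  X : Type
  ne : Nonempty X
  le : X → X → Prop
  le_refl : ∀ x, le x x
  le_trans : ∀ ⦃x y z⦄, le x y → le y z → le x z
  R : Set X → X → X → Prop
  coh : ∀ a : Set X, IsUpset le a →
    ∀ ⦃x y z⦄, le x y → R a y z → ∃ w, R a x w ∧ le w z

/-- Validity on a conditional Kripke frame: truth at every world under every
valuation of the proposition letters by upsets. -/
def CondFrame.valid (F : CondFrame) (φ : CForm) : Prop :=
  ∀ V : ℕ → Set F.X, (∀ p, IsUpset F.le (V p)) → ∀ x, x ∈ csat F.le F.R V φ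

/-! ## Conditional Heyting algebras -/

/-- A conditional Heyting algebra: a Heyting algebra with a binary operation
`cond` (written `⊳` in the paper) preserving finite meets in its second
argument. -/
class CondHeyting (A : Type) extends HeytingAlgebra A where
  cond : A → A → A
  cond_inf : ∀ a b c : A, cond a (b ⊓ c) = cond a b ⊓ cond a c
  cond_top : ∀ a : A, cond a ⊤ = ⊤

/-- Evaluation of an `L_⊳`-formula in a conditional Heyting algebra under an
assignment `σ` of the proposition letters. -/
def evalCHA {A : Type} [CondHeyting A] (σ : ℕ → A) : CForm → A
  | CForm.var p => σ p
  | CForm.bot => ⊥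
  | CForm.and φ ψ => evalCHA σ φ ⊓ evalCHA σ ψ
  | CForm.or φ ψ => evalCHA σ φ ⊔ evalCHA σ ψ
  | CForm.imp φ ψ => evalCHA σ φ ⇨ evalCHA σ ψ
  | CForm.cond φ ψ => CondHeyting.cond (evalCHA σ φ) (evalCHA σ ψ)

/-- A formula is satisfied in a conditional Heyting algebra if it evaluates to
`⊤` under every assignment. -/
def chaSat (A : Type) [CondHeyting A] (φ : CForm) : Prop :=
  ∀ σ : ℕ → A, evalCHA σ φ = ⊤

/-- A prime filter: a proper, nonempty, upward closed subset, closed under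
binary meets, such that `a ⊔ b ∈ x` implies `a ∈ x` or `b ∈ x`. -/
def IsPrimeFilter {A : Type} [Lattice A] (x : Set A) : Prop :=
  x.Nonempty ∧ x ≠ Set.univ ∧
  (∀ ⦃a b : A⦄, a ∈ x → a ≤ b → b ∈ x) ∧
  (∀ ⦃a b : A⦄, a ∈ x → b ∈ x → a ⊓ b ∈ x) ∧
  (∀ ⦃a b : A⦄, a ⊔ b ∈ x → a ∈ x ∨ b ∈ x)

/-! ## General conditional frames -/

/-- A general conditional frame `(X, ≤, 𝓡, A)`. -/
structure GenFrame where
  X : Type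
  le : X → X → Prop
  le_refl : ∀ x, le x x
  le_trans : ∀ ⦃x y z⦄, le x y → le y z → le x z
  le_antisymm : ∀ ⦃x y⦄, le x y → le y x → x = y
  A : Set (Set X)
  upA : ∀ a ∈ A, IsUpset le a
  univ_mem : Set.univ ∈ A
  empty_mem : ∅ ∈ A
  inter_mem : ∀ a ∈ A, ∀ b ∈ A, a ∩ b ∈ A
  union_mem : ∀ a ∈ A, ∀ b ∈ A, a ∪ b ∈ A
  R : Set X → X → X → Prop
  himp_mem : ∀ a ∈ A, ∀ b ∈ A, {x | ∀ y, le x y → y ∈ a → y ∈ b} ∈ A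
  cimp_mem : ∀ a ∈ A, ∀ b ∈ A, {x | ∀ y, R a x y → y ∈ b} ∈ A
  coh : ∀ a ∈ A, ∀ ⦃x y z⦄, le x y → R a y z → ∃ w, R a x w ∧ le w z

/-- The carrier of the complex algebra of a general frame: the admissible
upsets. -/
def GenFrame.AUp (G : GenFrame) : Type := {a : Set G.X // a ∈ G.A}

instance GenFrame.instLatticeAUp (G : GenFrame) : Lattice G.AUp where
  le a b := a.val ⊆ b.val
  le_refl a := subset_rfl
  le_trans a b c h h' := Set.Subset.trans h h'
  le_antisymm a b h h' := Subtype.ext (subset_antisymm h h')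
  sup a b := ⟨a.val ∪ b.val, G.union_mem _ a.2 _ b.2⟩
  le_sup_left a b := Set.subset_union_left
  le_sup_right a b := Set.subset_union_right
  sup_le a b c h h' := Set.union_subset h h'
  inf a b := ⟨a.val ∩ b.val, G.inter_mem _ a.2 _ b.2⟩
  inf_le_left a b := Set.inter_subset_left
  inf_le_right a b := Set.inter_subset_right
  le_inf a b c h h' := Set.subset_inter h h'

instance GenFrame.instHeytingAUp (G : GenFrame) : HeytingAlgebra G.AUp :=
  { GenFrame.instLatticeAUp G with
    top := ⟨Set.univ, G.univ_mem⟩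
    le_top := fun a => Set.subset_univ _
    bot := ⟨∅, G.empty_mem⟩
    bot_le := fun a => Set.empty_subset _
    himp := fun a b => ⟨{x | ∀ y, G.le x y → y ∈ a.val → y ∈ b.val},
      G.himp_mem _ a.2 _ b.2⟩
    compl := fun a => ⟨{x | ∀ y, G.le x y → y ∈ a.val → y ∈ (∅ : Set G.X)},
      G.himp_mem _ a.2 _ G.empty_mem⟩
    le_himp_iff := by
      intro a b c
      show a.val ⊆ {x | ∀ y, G.le x y → y ∈ b.val → y ∈ c.val} ↔
        a.val ∩ b.val ⊆ c.val
      constructor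
      · rintro h x ⟨hxa, hxb⟩
        exact h hxa x (G.le_refl x) hxb
      · intro h x hxa y hle hyb
        exact h ⟨G.upA a.val a.2 hle hxa, hyb⟩
    himp_bot := fun a => rfl }

/-- The complex algebra `AUp(G)` of a general frame `G` is a conditional
Heyting algebra, with `a ⊳ b := {x | R_a[x] ⊆ b}`. -/
instance GenFrame.instCondHeytingAUp (G : GenFrame) : CondHeyting G.AUp where
  cond a b := ⟨{x | ∀ y, G.R a.val x y → y ∈ b.val}, G.cimp_mem _ a.2 _ b.2⟩
  cond_inf a b c := Subtype.ext (Set.ext fun x => by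
    show (∀ y, G.R a.val x y → y ∈ b.val ∩ c.val) ↔
      (∀ y, G.R a.val x y → y ∈ b.val) ∧ (∀ y, G.R a.val x y → y ∈ c.val)
    constructor
    · intro h
      exact ⟨fun y hy => (h y hy).1, fun y hy => (h y hy).2⟩
    · rintro ⟨h1, h2⟩ y hy
      exact ⟨h1 y hy, h2 y hy⟩)
  cond_top a := Subtype.ext (Set.ext fun x => by
    show (∀ y, G.R a.val x y → y ∈ (Set.univ : Set G.X)) ↔
      x ∈ (Set.univ : Set G.X)
    exact ⟨fun _ => trivial, fun _ y _ => trivial⟩)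

/-! ## Conditional Esakia spaces -/

/-- A conditional Esakia space: an Esakia space `(X, le, top)` together with a
family of relations `R a` indexed by the clopen upsets `a`, such that
`{x | R_a[x] ⊆ b}` is clopen for clopen upsets `a, b`, each `R_a[x]` is
closed, and `(≤ ∘ R_a ∘ ≤) = R_a`. -/
structure CondEsakia where
  X : Type
  ne : Nonempty X
  le : X → X → Prop
  le_refl : ∀ x, le x x
  le_trans : ∀ ⦃x y z⦄, le x y → le y z → le x z
  le_antisymm : ∀ ⦃x y⦄, le x y → le y x → x = y
  top : TopologicalSpace X
  compact : @CompactSpace X top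
  sep : ∀ x y : X, ¬ le x y →
    ∃ a : Set X, @IsClopen X top a ∧ IsUpset le a ∧ x ∈ a ∧ y ∉ a
  down_clopen : ∀ a : Set X, @IsClopen X top a →
    @IsClopen X top {x | ∃ y ∈ a, le x y}
  R : Set X → X → X → Prop
  box_clopen : ∀ a b : Set X, @IsClopen X top a → IsUpset le a →
    @IsClopen X top b → IsUpset le b →
    @IsClopen X top {x | ∀ y, R a x y → y ∈ b}
  coh : ∀ a : Set X, @IsClopen X top a → IsUpset le a →
    ∀ x z : X, (∃ x' y', le x x' ∧ R a x' y' ∧ le y' z) ↔ R a x z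
  im_closed : ∀ a : Set X, @IsClopen X top a → IsUpset le a →
    ∀ x : X, @IsClosed X top {y | R a x y}

/-- `a` is a clopen upset of the conditional Esakia space `S`. -/
def CondEsakia.ClopUp (S : CondEsakia) (a : Set S.X) : Prop :=
  @IsClopen S.X S.top a ∧ IsUpset S.le a

/-- Validity on a conditional Esakia space: truth at every world under every
valuation of the proposition letters by clopen upsets. -/
def CondEsakia.valid (S : CondEsakia) (φ : CForm) : Prop :=
  ∀ V : ℕ → Set S.X, (∀ p, S.ClopUp (V p)) → ∀ x, x ∈ csat S.le S.R V φ

/-- The family of relations of the empty fill-in `κ_∅(S)`: it agrees with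
`S.R` on clopen upsets and is empty on all other sets. -/
def CondEsakia.emptyFill (S : CondEsakia) : Set S.X → S.X → S.X → Prop :=
  fun a x y => S.ClopUp a ∧ S.R a x y

/-- Validity on the empty fill-in `κ_∅(S)`, a conditional Kripke frame:
truth at every world under every valuation by (arbitrary) upsets. -/
def CondEsakia.emptyFillValid (S : CondEsakia) (φ : CForm) : Prop :=
  ∀ V : ℕ → Set S.X, (∀ p, IsUpset S.le (V p)) →
    ∀ x, x ∈ csat S.le S.emptyFill V φ

/-! ## The modal language `L_□` -/

/-- Formulas of the modal language `L_□`. -/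
inductive MForm : Type where
  | var : ℕ → MForm
  | bot : MForm
  | and : MForm → MForm → MForm
  | or : MForm → MForm → MForm
  | imp : MForm → MForm → MForm
  | box : MForm → MForm

/-- The translation `(−)^p : L_□ → L_⊳`: it fixes proposition letters, `⊥`,
`∧`, `∨`, `→`, and sends `□ψ` to `p ⊳ ψ^p`. -/
def MForm.transl (p : ℕ) : MForm → CForm
  | MForm.var q => CForm.var q
  | MForm.bot => CForm.bot
  | MForm.and φ ψ => CForm.and (φ.transl p) (ψ.transl p)
  | MForm.or φ ψ => CForm.or (φ.transl p) (ψ.transl p)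
  | MForm.imp φ ψ => CForm.imp (φ.transl p) (ψ.transl p)
  | MForm.box φ => CForm.cond (CForm.var p) (φ.transl p)

/-- The proposition letter `p` occurs (as a subformula) in a modal formula. -/
def MForm.occurs (p : ℕ) : MForm → Prop
  | MForm.var q => p = q
  | MForm.bot => False
  | MForm.and φ ψ => φ.occurs p ∨ ψ.occurs p
  | MForm.or φ ψ => φ.occurs p ∨ ψ.occurs p
  | MForm.imp φ ψ => φ.occurs p ∨ ψ.occurs p
  | MForm.box φ => φ.occurs p

/-- Truth sets of `L_□`-formulas in a modal model, by intuitionistic Kripke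
semantics with `x ⊨ □φ` iff every `y` with `x R y` satisfies `φ`. -/
def msat {X : Type} (le : X → X → Prop) (R : X → X → Prop)
    (V : ℕ → Set X) : MForm → Set X
  | MForm.var p => V p
  | MForm.bot => ∅
  | MForm.and φ ψ => msat le R V φ ∩ msat le R V ψ
  | MForm.or φ ψ => msat le R V φ ∪ msat le R V ψ
  | MForm.imp φ ψ => {x | ∀ y, le x y → y ∈ msat le R V φ → y ∈ msat le R V ψ}
  | MForm.box φ => {x | ∀ y, R x y → y ∈ msat le R V φ}

/-- A modal Esakia space: an Esakia space with a relation `R` such that each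
`R[x]` is closed and `R = (≤ ∘ R ∘ ≤)`. -/
structure ModalEsakia where
  X : Type
  ne : Nonempty X
  le : X → X → Prop
  le_refl : ∀ x, le x x
  le_trans : ∀ ⦃x y z⦄, le x y → le y z → le x z
  le_antisymm : ∀ ⦃x y⦄, le x y → le y x → x = y
  top : TopologicalSpace X
  compact : @CompactSpace X top
  sep : ∀ x y : X, ¬ le x y →
    ∃ a : Set X, @IsClopen X top a ∧ IsUpset le a ∧ x ∈ a ∧ y ∉ a
  down_clopen : ∀ a : Set X, @IsClopen X top a →
    @IsClopen X top {x | ∃ y ∈ a, le x y}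
  R : X → X → Prop
  im_closed : ∀ x : X, @IsClosed X top {y | R x y}
  coh : ∀ x z : X, (∃ x' y', le x x' ∧ R x' y' ∧ le y' z) ↔ R x z

/-- Validity on a modal Esakia space: truth everywhere under every valuation
by clopen upsets. -/
def ModalEsakia.valid (M : ModalEsakia) (φ : MForm) : Prop :=
  ∀ V : ℕ → Set M.X, (∀ p, @IsClopen M.X M.top (V p) ∧ IsUpset M.le (V p)) →
    ∀ x, x ∈ msat M.le M.R V φ

/-- Validity on the underlying modal frame `κ(M)` of a modal Esakia space:
truth everywhere under every valuation by arbitrary upsets. -/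
def ModalEsakia.frameValid (M : ModalEsakia) (φ : MForm) : Prop :=
  ∀ V : ℕ → Set M.X, (∀ p, IsUpset M.le (V p)) → ∀ x, x ∈ msat M.le M.R V φ

/-- An `L_□`-formula is d-persistent if its validity on a modal Esakia space
implies its validity on the underlying modal frame. -/
def DPersistent (φ : MForm) : Prop :=
  ∀ M : ModalEsakia, M.valid φ → M.frameValid φ

/-- The axiom `(mp)  (p ∧ (p ⊳ q)) → q`. -/
def axMp : CForm :=
  CForm.imp (CForm.and (CForm.var 0) (CForm.cond (CForm.var 0) (CForm.var 1)))
    (CForm.var 1)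

/-! ## Soundness -/

theorem csat_upset (F : CondFrame) (V : ℕ → Set F.X) (hV : ∀ p, IsUpset F.le (V p))
    (φ : CForm) : IsUpset F.le (csat F.le F.R V φ) := by
  induction φ with
  | var p => exact hV p
  | bot => intro x y _ h; exact h
  | and φ ψ h1 h2 => intro x y hxy h; exact ⟨h1 hxy h.1, h2 hxy h.2⟩
  | or φ ψ h1 h2 =>
    intro x y hxy h
    rcases h with h | h
    · exact Or.inl (h1 hxy h)
    · exact Or.inr (h2 hxy h)
  | imp φ ψ h1 h2 =>
    intro x y hxy h z hyz hz
    exact h z (F.le_trans hxy hyz) hz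
  | cond φ ψ h1 h2 =>
    intro x y hxy h z hz
    obtain ⟨w, hw, hwz⟩ := F.coh _ h1 hxy hz
    exact h2 hwz (h w hw)

theorem csat_psubst {X : Type} (le : X → X → Prop) (R : Set X → X → X → Prop)
    (V : ℕ → Set X) (σ : ℕ → CForm) (φ : CForm) :
    csat le R V (psubst σ φ) = csat le R (fun p => csat le R V (σ p)) φ := by
  induction φ with
  | var p => rfl
  | bot => rfl
  | and φ ψ h1 h2 => simp only [psubst, csat, h1, h2]
  | or φ ψ h1 h2 => simp only [psubst, csat, h1, h2]
  | imp φ ψ h1 h2 => simp only [psubst, csat, h1, h2]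
  | cond φ ψ h1 h2 => simp only [psubst, csat, h1, h2]

theorem csat_eq_of_cIff (F : CondFrame) (V : ℕ → Set F.X) (φ ψ : CForm)
    (h : ∀ x, x ∈ csat F.le F.R V (cIff φ ψ)) :
    csat F.le F.R V φ = csat F.le F.R V ψ := by
  ext x
  exact ⟨(h x).1 x (F.le_refl x), (h x).2 x (F.le_refl x)⟩

theorem mp_sound (φ : CForm) (h : ICK {axMp} φ) (F : CondFrame)
    (hF : ∀ (x : F.X) (a : Set F.X), IsUpset F.le a →
          x ∈ a → x ∈ upCl F.le {y | F.R a x y}) : F.valid φ := by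
  induction h with
  | prem h =>
    rw [Set.mem_singleton_iff] at h
    subst h
    intro V hV x y hxy hy
    obtain ⟨z, hz, hzy⟩ := hF y (V 0) (hV 0) hy.1
    exact hV 1 hzy (hy.2 z hz)
  | a1 => intro V hV x y _ hy; exact hy.1
  | a2 => intro V hV x y _ hy; exact hy.2
  | a3 =>
    intro V hV x y _ hy z hyz hz w hzw hw
    exact ⟨hy w (F.le_trans hyz hzw) hw, hz w hzw hw⟩
  | a4 => intro V hV x y _ hy; exact Or.inl hy
  | a5 => intro V hV x y _ hy; exact Or.inr hy
  | a6 =>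
    intro V hV x y _ hy z hyz hz w hzw hw
    rcases hw with hw | hw
    · exact hy w (F.le_trans hyz hzw) hw
    · exact hz w hzw hw
  | a7 => intro V hV x y _ hy; exact absurd hy (Set.notMem_empty y)
  | a8 => intro V hV x y _ hy z hyz hz; exact hV 0 hyz hy
  | a9 =>
    intro V hV x y _ hy z hyz hz w hzw hw
    exact hy w (F.le_trans hyz hzw) hw w (F.le_refl w) (hz w hzw hw)
  | kc =>
    intro V hV x
    refine ⟨fun y _ hy => ⟨fun z hz => (hy z hz).1, fun z hz => (hy z hz).2⟩, ?_⟩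
    intro y _ hy z hz
    exact ⟨hy.1 z hz, hy.2 z hz⟩
  | nc =>
    intro V hV x
    exact ⟨fun y _ _ z _ hz => hz, fun y _ _ z _ w _ hw => hw⟩
  | subst σ _ ih =>
    intro V hV x
    rw [csat_psubst]
    exact ih _ (fun p => csat_upset F V hV (σ p)) x
  | mp _ _ ih1 ih2 =>
    intro V hV x
    exact ih1 V hV x x (F.le_refl x) (ih2 V hV x)
  | congL _ ih =>
    intro V hV x
    have e := csat_eq_of_cIff F V _ _ (ih V hV)
    refine ⟨fun y _ hy z hz => hy z ?_, fun y _ hy z hz => hy z ?_⟩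
    · rw [e]; exact hz
    · rw [← e]; exact hz
  | congR _ ih =>
    intro V hV x
    have e := csat_eq_of_cIff F V _ _ (ih V hV)
    refine ⟨fun y _ hy z hz => ?_, fun y _ hy z hz => ?_⟩
    · rw [← e]; exact hy z hz
    · rw [e]; exact hy z hz

/-! ## Completeness: theories -/

/-- Three-letter substitution. -/
def sub3 (a b c : CForm) : ℕ → CForm
  | 0 => a
  | 1 => b
  | _ => c

/-- Theories of `ICK ⊕ mp`. -/
def IsTh (T : Set CForm) : Prop :=
  (∀ φ, ICK {axMp} φ → φ ∈ T) ∧ ∀ φ ψ, CForm.imp φ ψ ∈ T → φ ∈ T → ψ ∈ T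

theorem isTh_L : IsTh {φ | ICK {axMp} φ} := ⟨fun _ h => h, fun _ _ h h' => ICK.mp h h'⟩

/-- The theory generated by `T` and `a`. -/
def extTh (T : Set CForm) (a : CForm) : Set CForm := {b | CForm.imp a b ∈ T}

theorem th_k {T : Set CForm} (hT : IsTh T) (a b : CForm) (h : a ∈ T) : CForm.imp b a ∈ T :=
  hT.2 _ _ (hT.1 _ (ICK.subst (sub3 a b b) ICK.a8)) h

theorem th_s {T : Set CForm} (hT : IsTh T) (a b c : CForm)
    (h : CForm.imp a (CForm.imp b c) ∈ T) (h' : CForm.imp a b ∈ T) : CForm.imp a c ∈ T :=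
  hT.2 _ _ (hT.2 _ _ (hT.1 _ (ICK.subst (sub3 a b c) ICK.a9)) h) h'

theorem th_id {T : Set CForm} (hT : IsTh T) (a : CForm) : CForm.imp a a ∈ T :=
  th_s hT a (CForm.imp a a) a
    (hT.1 _ (ICK.subst (sub3 a (CForm.imp a a) a) ICK.a8))
    (hT.1 _ (ICK.subst (sub3 a a a) ICK.a8))

theorem isTh_ext {T : Set CForm} (hT : IsTh T) (a : CForm) : IsTh (extTh T a) :=
  ⟨fun φ h => th_k hT _ _ (hT.1 φ h), fun φ ψ h h' => th_s hT a φ ψ h h'⟩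

theorem sub_ext {T : Set CForm} (hT : IsTh T) (a : CForm) : T ⊆ extTh T a :=
  fun _ h => th_k hT _ _ h

theorem mem_ext {T : Set CForm} (hT : IsTh T) (a : CForm) : a ∈ extTh T a := th_id hT a

theorem th_and {T : Set CForm} (hT : IsTh T) (a b : CForm) :
    CForm.and a b ∈ T ↔ a ∈ T ∧ b ∈ T := by
  constructor
  · intro h
    exact ⟨hT.2 _ _ (hT.1 _ (ICK.subst (sub3 a b b) ICK.a1)) h,
      hT.2 _ _ (hT.1 _ (ICK.subst (sub3 a b b) ICK.a2)) h⟩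
  · rintro ⟨h1, h2⟩
    have h3 := hT.2 _ _ (hT.2 _ _ (hT.1 _ (ICK.subst (sub3 cTop a b) ICK.a3))
      (th_k hT _ _ h1)) (th_k hT _ _ h2)
    exact hT.2 _ _ h3 (th_id hT CForm.bot)

theorem th_inl {T : Set CForm} (hT : IsTh T) (a b : CForm) (h : a ∈ T) : CForm.or a b ∈ T :=
  hT.2 _ _ (hT.1 _ (ICK.subst (sub3 a b b) ICK.a4)) h

theorem th_inr {T : Set CForm} (hT : IsTh T) (a b : CForm) (h : b ∈ T) : CForm.or a b ∈ T :=
  hT.2 _ _ (hT.1 _ (ICK.subst (sub3 a b b) ICK.a5)) h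

theorem th_case {T : Set CForm} (hT : IsTh T) (a b c : CForm) (h : CForm.or a b ∈ T)
    (h1 : CForm.imp a c ∈ T) (h2 : CForm.imp b c ∈ T) : c ∈ T :=
  hT.2 _ _ (hT.2 _ _ (hT.2 _ _ (hT.1 _ (ICK.subst (sub3 a b c) ICK.a6)) h1) h2) h

theorem th_bot {T : Set CForm} (hT : IsTh T) (a : CForm) (h : CForm.bot ∈ T) : a ∈ T :=
  hT.2 _ _ (hT.1 _ (ICK.subst (sub3 a a a) ICK.a7)) h

theorem L_iff {a b : CForm} (h1 : ICK {axMp} (CForm.imp a b))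
    (h2 : ICK {axMp} (CForm.imp b a)) : ICK {axMp} (cIff a b) :=
  (th_and isTh_L _ _).2 ⟨h1, h2⟩

theorem th_iff {T : Set CForm} (hT : IsTh T) {a b : CForm} (h : ICK {axMp} (cIff a b)) :
    a ∈ T ↔ b ∈ T := by
  have := (th_and hT _ _).1 (hT.1 _ h)
  exact ⟨hT.2 _ _ this.1, hT.2 _ _ this.2⟩

theorem cond_and {T : Set CForm} (hT : IsTh T) (a b c : CForm) :
    CForm.cond a (CForm.and b c) ∈ T ↔ CForm.cond a b ∈ T ∧ CForm.cond a c ∈ T := by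
  rw [← th_and hT]
  exact th_iff hT (ICK.subst (sub3 a b c) ICK.kc)

theorem cond_mono {T : Set CForm} (hT : IsTh T) {a b c : CForm}
    (h : ICK {axMp} (CForm.imp b c)) (hb : CForm.cond a b ∈ T) : CForm.cond a c ∈ T := by
  have e : ICK {axMp} (cIff b (CForm.and b c)) := by
    apply L_iff
    · have hE := isTh_ext isTh_L b
      exact (th_and hE b c).2 ⟨mem_ext isTh_L b, h⟩
    · exact ICK.subst (sub3 b c c) ICK.a1
  exact ((cond_and hT a b c).1 ((th_iff hT (ICK.congR e)).1 hb)).2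

theorem isTh_cond {T : Set CForm} (hT : IsTh T) (a : CForm) :
    IsTh {b | CForm.cond a b ∈ T} := by
  constructor
  · intro b hb
    have h1 : CForm.cond a cTop ∈ T :=
      (th_iff hT (ICK.subst (sub3 a a a) ICK.nc)).2 (th_id hT CForm.bot)
    exact cond_mono hT (th_k isTh_L b cTop hb) h1
  · intro b c h1 h2
    have h3 := (cond_and hT a (CForm.imp b c) b).2 ⟨h1, h2⟩
    refine cond_mono hT ?_ h3
    have hE := isTh_ext isTh_L (CForm.and (CForm.imp b c) b)
    have h4 := (th_and hE _ _).1 (mem_ext isTh_L (CForm.and (CForm.imp b c) b))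
    exact hE.2 _ _ h4.1 h4.2

/-- Prime theories. -/
def IsPrimeTh (T : Set CForm) : Prop :=
  IsTh T ∧ CForm.bot ∉ T ∧ ∀ a b, CForm.or a b ∈ T → a ∈ T ∨ b ∈ T

theorem exists_prime {T : Set CForm} (hT : IsTh T) {φ : CForm} (hφ : φ ∉ T) :
    ∃ P, IsPrimeTh P ∧ T ⊆ P ∧ φ ∉ P := by
  obtain ⟨M, hTM, hM⟩ := zorn_subset_nonempty {S | IsTh S ∧ φ ∉ S} (by
    intro c hc hch hne
    refine ⟨⋃₀ c, ⟨⟨?_, ?_⟩, ?_⟩, fun s hs => Set.subset_sUnion_of_mem hs⟩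
    · intro ψ hψ
      obtain ⟨S, hS⟩ := hne
      exact ⟨S, hS, (hc hS).1.1 ψ hψ⟩
    · rintro a b ⟨S, hS, h1⟩ ⟨S', hS', h2⟩
      rcases hch.total hS hS' with h | h
      · exact ⟨S', hS', (hc hS').1.2 a b (h h1) h2⟩
      · exact ⟨S, hS, (hc hS).1.2 a b h1 (h h2)⟩
    · rintro ⟨S, hS, h⟩
      exact (hc hS).2 h) T ⟨hT, hφ⟩
  have hth := hM.prop.1
  have hn := hM.prop.2
  have key : ∀ a, a ∉ M → CForm.imp a φ ∈ M := by
    intro a ha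
    by_contra hcon
    exact ha (hM.le_of_ge (y := extTh M a) ⟨isTh_ext hth a, hcon⟩ (sub_ext hth a)
      (mem_ext hth a))
  refine ⟨M, ⟨hth, fun hb => hn (th_bot hth _ hb), ?_⟩, hTM, hn⟩
  intro a b hab
  by_contra hcon
  rw [not_or] at hcon
  exact hn (th_case hth a b φ hab (key a hcon.1) (key b hcon.2))

/-! ## The canonical frame -/

/-- Worlds of the canonical frame. -/
def CanX : Type := {T : Set CForm // IsPrimeTh T}

/-- Canonical truth set. -/
def tset (φ : CForm) : Set CanX := {x | φ ∈ x.1}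

/-- Inclusion order. -/
def canLe (x y : CanX) : Prop := x.1 ⊆ y.1

/-- Canonical relations: the order is used for undefinable upsets. -/
def canR (a : Set CanX) (x y : CanX) : Prop :=
  (∃ φ, a = tset φ ∧ ∀ ψ, CForm.cond φ ψ ∈ x.1 → ψ ∈ y.1) ∨
    ((¬ ∃ φ, a = tset φ) ∧ canLe x y)

theorem imp_of_tset {φ ψ : CForm} (h : tset φ ⊆ tset ψ) : ICK {axMp} (CForm.imp φ ψ) := by
  by_contra hcon
  obtain ⟨P, hP, hs, hn⟩ := exists_prime (isTh_ext isTh_L φ) (φ := ψ) hcon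
  exact hn (h (show (⟨P, hP⟩ : CanX) ∈ tset φ from hs (mem_ext isTh_L φ)))

theorem canR_tset (φ : CForm) (x y : CanX) :
    canR (tset φ) x y ↔ ∀ ψ, CForm.cond φ ψ ∈ x.1 → ψ ∈ y.1 := by
  constructor
  · rintro (⟨χ, e, h⟩ | ⟨h, _⟩)
    · intro ψ hψ
      have e' : ICK {axMp} (cIff φ χ) :=
        L_iff (imp_of_tset e.subset) (imp_of_tset e.symm.subset)
      exact h ψ ((th_iff x.2.1 (ICK.congL e')).1 hψ)
    · exact absurd ⟨φ, rfl⟩ h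
  · intro h
    exact Or.inl ⟨φ, rfl, h⟩

/-- The canonical frame. -/
def canFrame (hne : Nonempty CanX) : CondFrame where
  X := CanX
  ne := hne
  le := canLe
  le_refl x := Set.Subset.refl x.1
  le_trans x y z h h' := Set.Subset.trans h h'
  R := canR
  coh := by
    intro a _ x y z hxy h
    refine ⟨z, ?_, Set.Subset.refl z.1⟩
    rcases h with ⟨φ, e, h⟩ | ⟨hn, h⟩
    · exact Or.inl ⟨φ, e, fun ψ hψ => h ψ (hxy hψ)⟩
    · exact Or.inr ⟨hn, Set.Subset.trans hxy h⟩

theorem truth_lemma (φ : CForm) :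
    csat canLe canR (fun p => tset (CForm.var p)) φ = tset φ := by
  induction φ with
  | var p => rfl
  | bot =>
    ext x
    exact ⟨fun h => absurd h (Set.notMem_empty x), fun h => absurd h x.2.2.1⟩
  | and a b h1 h2 =>
    ext x
    simp only [csat, h1, h2]
    exact (th_and x.2.1 a b).symm
  | or a b h1 h2 =>
    ext x
    simp only [csat, h1, h2]
    refine ⟨?_, x.2.2.2 a b⟩
    rintro (h | h)
    · exact th_inl x.2.1 a b h
    · exact th_inr x.2.1 a b h
  | imp a b h1 h2 =>
    ext x
    simp only [csat, h1, h2]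
    constructor
    · intro h
      by_contra hcon
      obtain ⟨P, hP, hs, hn⟩ := exists_prime (isTh_ext x.2.1 a) (φ := b) hcon
      exact hn (h ⟨P, hP⟩ (fun _ hc => hs (sub_ext x.2.1 a hc)) (hs (mem_ext x.2.1 a)))
    · intro h y hxy hy
      exact y.2.1.2 _ _ (hxy h) hy
  | cond a b h1 h2 =>
    ext x
    simp only [csat, h1, h2]
    constructor
    · intro h
      by_contra hcon
      obtain ⟨P, hP, hs, hn⟩ := exists_prime (isTh_cond x.2.1 a) (φ := b) hcon
      exact hn (h ⟨P, hP⟩ ((canR_tset a x ⟨P, hP⟩).2 (fun _ hc => hs hc)))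
    · intro h y hy
      exact (canR_tset a x y).1 hy b h

theorem canFrame_mp (x : CanX) (a : Set CanX) (hx : x ∈ a) :
    x ∈ upCl canLe {y | canR a x y} := by
  refine ⟨x, ?_, Set.Subset.refl x.1⟩
  by_cases h : ∃ φ, a = tset φ
  · obtain ⟨φ, rfl⟩ := h
    refine Or.inl ⟨φ, rfl, fun ψ hψ => ?_⟩
    have h1 : ICK {axMp} (CForm.imp (CForm.and φ (CForm.cond φ ψ)) ψ) :=
      ICK.subst (sub3 φ ψ ψ) (ICK.prem (Set.mem_singleton axMp))
    exact x.2.1.2 _ _ (x.2.1.1 _ h1) ((th_and x.2.1 _ _).2 ⟨hx, hψ⟩)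
  · exact Or.inr ⟨h, Set.Subset.refl x.1⟩

theorem mp_complete (φ : CForm)
    (h : ∀ F : CondFrame,
        (∀ (x : F.X) (a : Set F.X), IsUpset F.le a →
          x ∈ a → x ∈ upCl F.le {y | F.R a x y}) →
        F.valid φ) : ICK {axMp} φ := by
  by_contra hcon
  obtain ⟨P, hP, _, hn⟩ := exists_prime isTh_L (φ := φ) hcon
  have h1 := h (canFrame ⟨⟨P, hP⟩⟩) (fun x a _ hx => canFrame_mp x a hx)
    (fun p => tset (CForm.var p)) (fun p x y hxy hx => hxy hx) ⟨P, hP⟩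
  have h2 : (⟨P, hP⟩ : CanX) ∈ csat canLe canR (fun p => tset (CForm.var p)) φ := h1
  rw [truth_lemma] at h2
  exact hn h2

/-- `ICK ⊕ ((p ∧ (p ⊳ q)) → q)` is sound and complete with
respect to conditional Kripke frames satisfying: for all worlds `x` and upsets
`a`, if `x ∈ a` then `x ∈ ↑(R_a[x])`. -/
theorem mp_completeness (φ : CForm) :
    ICK {axMp} φ ↔
      ∀ F : CondFrame,
        (∀ (x : F.X) (a : Set F.X), IsUpset F.le a →
          x ∈ a → x ∈ upCl F.le {y | F.R a x y}) →
        F.valid φ := by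
  exact ⟨fun h F hF => mp_sound φ h F hF, mp_complete φ⟩
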